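/- Suppose z, w in the first Weyl algebra A₁ satisfy [z,w] = 1 and z = f(p)q + g(p) for some f, g ∈ K[X] with f ≠ 0 (i.e., z has degree 1 in q). Then z = αq + g(p) with α ∈ K^*, and w = γ - α^{-1}p + h(z) for some γ ∈ K and h ∈ K[X]; in particular z and w generate A₁ as a K-algebra. -/

import Mathlib

/-- The defining relation of the first Weyl algebra: `p q = q p + 1`,
where `p` and `q` are the images of the generators `0` and `1`. -/
inductive WeylRel (K : Type) [Field K] :
    FreeAlgebra K (Fin 2) → FreeAlgebra K (Fin 2) → Prop
  | rel : WeylRel K (FreeAlgebra.ι K 0 * FreeAlgebra.ι K 1)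
      (FreeAlgebra.ι K 1 * FreeAlgebra.ι K 0 + 1)

/-- The first Weyl algebra `A₁` over `K`. -/
abbrev Weyl (K : Type) [Field K] := RingQuot (WeylRel K)

/-- The generator `p` of `A₁`. -/
noncomputable def Wp (K : Type) [Field K] : Weyl K :=
  RingQuot.mkAlgHom K (WeylRel K) (FreeAlgebra.ι K 0)

/-- The generator `q` of `A₁`. -/
noncomputable def Wq (K : Type) [Field K] : Weyl K :=
  RingQuot.mkAlgHom K (WeylRel K) (FreeAlgebra.ι K 1)

/-- The homogeneous component `D_t = span{p^i q^s : s - i = t}` of `A₁`. -/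
noncomputable def WeylD (K : Type) [Field K] (t : ℤ) : Submodule K (Weyl K) :=
  Submodule.span K {x | ∃ i s : ℕ, (s : ℤ) - (i : ℤ) = t ∧ x = Wp K ^ i * Wq K ^ s}

/-!
The derivation `D = ad p` is locally nilpotent on `A₁`, and its kernel is `K[p]`. Let `n + 1` be
maximal with `D^(n+1) w ≠ 0`, so that `D^(n+1) w = b(p)`. Applying `D^(n+1)` to the constant
`[z, w]` gives `(n + 1) b f' = f b'`, hence `b = c f^(n+1)`. As `D z = f(p)`, this is a scalar
multiple of `D^(n+1) z^(n+1)`, and subtracting a multiple of `z^(n+1)` from `w` decreases `n`.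
In the end `w = b(p) + h(z)`, and `[z, w] = 1` becomes `f b' = -1`, which forces `f` to be constant.
-/

open Polynomial LieAlgebra

section Polynomial

variable {K : Type*} [Field K] [CharZero K]

theorem exists_eq_C_mul_of_wronskian_eq_zero {a b : K[X]}
    (hb : b ≠ 0) (h : wronskian a b = 0) : ∃ c : K, a = C c * b := by
  classical
  set d := EuclideanDomain.gcd a b
  have hd : d ≠ 0 := fun h0 => hb (EuclideanDomain.gcd_eq_zero_iff.1 h0).2
  obtain ⟨a', ha⟩ : d ∣ a := EuclideanDomain.gcd_dvd_left a b
  obtain ⟨b', hb'⟩ : d ∣ b := EuclideanDomain.gcd_dvd_right a b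
  have hcop : IsCoprime a' b' := by
    refine ⟨EuclideanDomain.gcdA a b, EuclideanDomain.gcdB a b, mul_left_cancel₀ hd ?_⟩
    linear_combination -EuclideanDomain.gcd_eq_gcd_ab a b - EuclideanDomain.gcdA a b * ha -
      EuclideanDomain.gcdB a b * hb'
  have hw : wronskian a' b' = 0 := by
    refine (mul_eq_zero.1 ?_).resolve_left (pow_ne_zero 2 hd)
    rw [← h, ha, hb']
    simp only [wronskian, derivative_mul]
    ring
  obtain ⟨ha0, hb0⟩ := hcop.wronskian_eq_zero_iff.1 hw
  obtain ⟨r, rfl⟩ := natDegree_eq_zero.1 (derivative_eq_zero.1 ha0)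
  obtain ⟨s, rfl⟩ := natDegree_eq_zero.1 (derivative_eq_zero.1 hb0)
  have hs : s ≠ 0 := by
    rintro rfl
    exact hb (by rw [hb', C_0, mul_zero])
  refine ⟨r / s, ?_⟩
  rw [ha, hb', mul_left_comm, ← C_mul, div_mul_cancel₀ _ hs]

theorem exists_eq_C_mul_pow_of_mul_derivative_eq {f b : K[X]} {n : ℕ} (hf : f ≠ 0)
    (h : (n + 1 : K[X]) * b * derivative f = f * derivative b) :
    ∃ c : K, b = C c * f ^ (n + 1) := by
  refine exists_eq_C_mul_of_wronskian_eq_zero (pow_ne_zero _ hf) ?_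
  rw [wronskian, derivative_pow_succ, C_add, map_natCast, C_1]
  linear_combination f ^ n * h

theorem exists_eq_C_of_mul_derivative_eq_neg_one {f b : K[X]} (h : f * derivative b = -1) :
    ∃ α γ : K, α ≠ 0 ∧ f = C α ∧ b = C γ - C α⁻¹ * X := by
  have hunit : IsUnit f := IsUnit.of_mul_eq_one (-derivative b) (by rw [mul_neg, h, neg_neg])
  obtain ⟨α, hα, rfl⟩ := isUnit_iff.1 hunit
  have hα0 : α ≠ 0 := hα.ne_zero
  have hCα : (C α⁻¹ * C α : K[X]) = 1 := by rw [← C_mul, inv_mul_cancel₀ hα0, C_1]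
  have hder : derivative (b + C α⁻¹ * X) = 0 := by
    rw [derivative_add, derivative_C_mul, derivative_X]
    linear_combination -derivative b * hCα + C α⁻¹ * h
  obtain ⟨γ, hγ⟩ := natDegree_eq_zero.1 (derivative_eq_zero.1 hder)
  exact ⟨α, γ, hα0, rfl, eq_sub_of_add_eq hγ.symm⟩

end Polynomial

section Lie

attribute [local instance] LieRing.ofAssociativeRing

variable {R A : Type*} [CommRing R] [Ring A] [Algebra R A]

theorem commute_aeval_left {x y : A} (h : Commute x y) (f : R[X]) : Commute (aeval x f) y :=
  (Algebra.commute_of_mem_adjoin_singleton_of_commute (aeval_mem_adjoin_singleton R x) h.symm).symm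

theorem lie_mul_eq (x y z : A) : ⁅x, y * z⁆ = ⁅x, y⁆ * z + y * ⁅x, z⁆ := by
  simp only [Ring.lie_def]
  noncomm_ring

theorem lie_one_eq_zero (x : A) : ⁅x, (1 : A)⁆ = 0 := (Commute.one_right x).lie_eq

theorem lie_self_aeval (x : A) (f : R[X]) : ⁅x, aeval x f⁆ = 0 :=
  (commute_aeval_left (Commute.refl x) f).symm.lie_eq

theorem lie_aeval_of_lie_lie_eq_zero {x y : A} (h : ⁅x, ⁅x, y⁆⁆ = 0) (f : R[X]) :
    ⁅aeval x f, y⁆ = ⁅x, y⁆ * aeval x (derivative f) := by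
  have hcomm : Commute x ⁅x, y⁆ := commute_iff_lie_eq.2 h
  induction f using Polynomial.induction_on with
  | C a => simp [Ring.lie_def, Algebra.commutes]
  | add f g hf hg => simp only [map_add, add_lie, mul_add, hf, hg]
  | monomial n a ih =>
    generalize hf : C a * X ^ n = f at ih
    calc ⁅aeval x (C a * X ^ (n + 1)), y⁆ = ⁅aeval x f * x, y⁆ := by
          rw [pow_succ, ← mul_assoc, hf, map_mul, aeval_X]
      _ = aeval x f * ⁅x, y⁆ + ⁅aeval x f, y⁆ * x := by simp only [Ring.lie_def]; noncomm_ring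
      _ = ⁅x, y⁆ * aeval x (derivative (f * X)) := by
          rw [ih, (commute_aeval_left hcomm f).eq, derivative_mul, derivative_X,
            mul_one, map_add, map_mul, aeval_X, mul_add, mul_assoc, add_comm]
      _ = _ := by rw [pow_succ, ← mul_assoc, hf]

-- The case `f = X ^ (n + 1)` of the commutator formula, read in `Module.End R V`; for `D = ad x` it
-- is a Leibniz rule.
theorem pow_succ_apply_of_lie_lie_eq_zero {V : Type*} [AddCommGroup V] [Module R V]
    {D L : Module.End R V} (h : ⁅D, ⁅D, L⁆⁆ = 0) (n : ℕ) (v : V) :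
    (D ^ (n + 1)) (L v) = L ((D ^ (n + 1)) v) + (n + 1 : R) • ⁅D, L⁆ ((D ^ n) v) := by
  have hpow : ⁅D ^ (n + 1), L⁆ = (n + 1 : R) • (⁅D, L⁆ * D ^ n) := by
    have hX := lie_aeval_of_lie_lie_eq_zero h (X ^ (n + 1) : R[X])
    rwa [map_pow, aeval_X, derivative_X_pow, map_mul, aeval_C, ← Algebra.smul_def, mul_smul_comm,
      map_pow, aeval_X, Nat.add_sub_cancel, Nat.cast_add_one] at hX
  exact sub_eq_iff_eq_add'.1 (LinearMap.congr_fun hpow v)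

theorem lie_aeval_of_lie_eq_aeval {x z : A} {f : R[X]} (hz : ⁅x, z⁆ = aeval x f) (b : R[X]) :
    ⁅z, aeval x b⁆ = -aeval x (f * derivative b) := by
  rw [← lie_skew, lie_aeval_of_lie_lie_eq_zero (by rw [hz, lie_self_aeval]), hz, map_mul]

theorem lie_ad_mulLeft (x y : A) :
    ⁅ad R A x, LinearMap.mulLeft R y⁆ = LinearMap.mulLeft R ⁅x, y⁆ := by
  ext v
  exact sub_eq_iff_eq_add.2 (lie_mul_eq x y v)

theorem ad_pow_succ_mul {x y : A} (h : ⁅x, ⁅x, y⁆⁆ = 0) (n : ℕ) (v : A) :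
    (ad R A x ^ (n + 1)) (y * v) =
      y * (ad R A x ^ (n + 1)) v + (n + 1 : R) • (⁅x, y⁆ * (ad R A x ^ n) v) := by
  simpa [lie_ad_mulLeft] using pow_succ_apply_of_lie_lie_eq_zero
    (D := ad R A x) (L := LinearMap.mulLeft R y) (by simp [lie_ad_mulLeft, h]) n v

theorem ad_pow_succ_lie {L : Type*} [LieRing L] [LieAlgebra R L] {x y : L}
    (h : ⁅x, ⁅x, y⁆⁆ = 0) (n : ℕ) (v : L) :
    (ad R L x ^ (n + 1)) ⁅y, v⁆ =
      ⁅y, (ad R L x ^ (n + 1)) v⁆ + (n + 1 : R) • ⁅⁅x, y⁆, (ad R L x ^ n) v⁆ := by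
  have hD : ⁅ad R L x, ⁅ad R L x, ad R L y⁆⁆ = 0 := by
    rw [← LieHom.map_lie, ← LieHom.map_lie, h, map_zero]
  rw [← ad_apply R L y, pow_succ_apply_of_lie_lie_eq_zero hD, ← LieHom.map_lie]
  rfl

theorem submodule_eq_top_of_mul_mem {s : Set A} (hs : Algebra.adjoin R s = ⊤)
    {M : Submodule R A} (one_mem : 1 ∈ M) (mul_mem : ∀ x ∈ s, ∀ y ∈ M, x * y ∈ M) : M = ⊤ := by
  rw [eq_top_iff, ← Algebra.top_toSubmodule, ← hs, Algebra.adjoin_toSubmodule_le]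
  exact fun x hx => Submonoid.closure_induction_left one_mem (fun x hx y _ => mul_mem x hx y) hx

theorem ad_pow_self_pow {x z : A} {f : R[X]} (hz : ⁅x, z⁆ = aeval x f) (n : ℕ) :
    (ad R A x ^ n) (z ^ n) = (n.factorial : R) • aeval x (f ^ n) := by
  induction n with
  | zero => simp
  | succ n ih =>
    have h0 : (ad R A x ^ (n + 1)) (z ^ n) = 0 := by
      rw [pow_succ', Module.End.mul_apply, ih, map_smul, ad_apply, lie_self_aeval, smul_zero]
    rw [pow_succ' z, ad_pow_succ_mul (by rw [hz, lie_self_aeval]), h0, ih, hz, mul_zero, zero_add,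
      mul_smul_comm, smul_smul, ← map_mul, ← pow_succ', Nat.factorial_succ]
    push_cast
    rfl

end Lie

section CanonicalPair

attribute [local instance] LieRing.ofAssociativeRing

variable {R A : Type*} [CommRing R] [Ring A] [Algebra R A] {p q : A}

theorem exists_ad_pow_eq_zero (hpq : ⁅p, q⁆ = 1) (hgen : Algebra.adjoin R {p, q} = ⊤) (x : A) :
    ∃ n, (ad R A p ^ n) x = 0 := by
  suffices h : (LieSubalgebra.engel R p).toSubmodule = ⊤ from
    (LieSubalgebra.mem_engel_iff R p x).1 (h.ge Submodule.mem_top)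
  refine submodule_eq_top_of_mul_mem hgen ?_ ?_
  · exact (LieSubalgebra.mem_engel_iff R p 1).2 ⟨1, by simp [Ring.lie_def]⟩
  · have hmul {y : A} (hy : ⁅p, ⁅p, y⁆⁆ = 0) (v : A) (hv : v ∈ LieSubalgebra.engel R p) :
        y * v ∈ LieSubalgebra.engel R p := by
      obtain ⟨n, hn⟩ := (LieSubalgebra.mem_engel_iff R p v).1 hv
      refine (LieSubalgebra.mem_engel_iff R p _).2 ⟨n + 1, ?_⟩
      rw [ad_pow_succ_mul hy, hn, pow_succ', Module.End.mul_apply, hn]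
      simp
    rintro y (rfl | rfl)
    · exact hmul (by simp)
    · exact hmul (by rw [hpq, lie_one_eq_zero])

theorem exists_eq_aeval_add_mul (hpq : ⁅p, q⁆ = 1) (hgen : Algebra.adjoin R {p, q} = ⊤) (x : A) :
    ∃ (a : R[X]) (y : A), x = aeval p a + y * q := by
  let M : Submodule R A :=
    LinearMap.range (aeval (R := R) p).toLinearMap ⊔ LinearMap.range (LinearMap.mulRight R q)
  have mem_M (v : A) : v ∈ M ↔ ∃ (a : R[X]) (y : A), v = aeval p a + y * q := by
    simp [M, Submodule.mem_sup, eq_comm]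
  refine (mem_M x).1 (submodule_eq_top_of_mul_mem hgen (M := M) ?_ ?_ ▸ Submodule.mem_top)
  · exact (mem_M 1).2 ⟨1, 0, by simp⟩
  · rintro s (rfl | rfl) v hv <;> obtain ⟨a, y, rfl⟩ := (mem_M v).1 hv
    · exact (mem_M _).2 ⟨X * a, s * y, by rw [map_mul, aeval_X, mul_add, mul_assoc]⟩
    · refine (mem_M _).2 ⟨-derivative a, aeval p a + s * y, ?_⟩
      have hs : aeval p a * s - s * aeval p a = aeval p (derivative a) := by
        rw [← Ring.lie_def, lie_aeval_of_lie_lie_eq_zero (by rw [hpq, lie_one_eq_zero]), hpq,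
          one_mul]
      rw [map_neg, ← hs]
      noncomm_ring

variable {K : Type*} [Field K] [Algebra K A]

theorem adjoin_pair_eq_top_of_eq (hgen : Algebra.adjoin K {p, q} = ⊤) {z w : A} {α γ : K}
    {g h : K[X]} (hα : α ≠ 0) (hz : z = α • q + aeval p g)
    (hw : w = γ • (1 : A) - α⁻¹ • p + aeval z h) : Algebra.adjoin K {z, w} = ⊤ := by
  set S := Algebra.adjoin K {z, w}
  have hzS : z ∈ S := Algebra.subset_adjoin (by simp)
  have hwS : w ∈ S := Algebra.subset_adjoin (by simp)
  have aeval_mem {x : A} (hx : x ∈ S) (a : K[X]) : aeval x a ∈ S :=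
    Algebra.adjoin_le (Set.singleton_subset_iff.2 hx) (aeval_mem_adjoin_singleton K x)
  have hpS : p ∈ S := by
    have hp : p = α • (γ • (1 : A) + aeval z h - w) := by
      rw [hw, add_sub_add_right_eq_sub, sub_sub_cancel, smul_inv_smul₀ hα]
    rw [hp]
    exact S.smul_mem (S.sub_mem (S.add_mem (S.smul_mem S.one_mem γ) (aeval_mem hzS h)) hwS) α
  have hqS : q ∈ S := by
    have hq : q = α⁻¹ • (z - aeval p g) := by
      rw [hz, add_sub_cancel_right, inv_smul_smul₀ hα]
    rw [hq]
    exact S.smul_mem (S.sub_mem hzS (aeval_mem hpS g)) _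
  exact top_unique (hgen ▸ Algebra.adjoin_le (by rintro _ (rfl | rfl) <;> assumption))

variable [CharZero K]

-- Applying `ad p` to the equation turns it into the same equation for `⁅p, x⁆`, with `m` increased
-- by one.
theorem eq_zero_of_smul_add_lie_mul_eq_zero (hpq : ⁅p, q⁆ = 1) {x : A} {n m : ℕ}
    (hn : (ad K A p ^ n) x = 0) (h : (m + 1 : K) • x + ⁅p, x⁆ * q = 0) : x = 0 := by
  induction n generalizing x m with
  | zero => simpa using hn
  | succ n ih =>
    have hlie : ⁅p, x⁆ = 0 := by
      refine ih (m := m + 1) (by rw [← hn, pow_succ]; rfl) ?_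
      have hp : ⁅p, (m + 1 : K) • x + ⁅p, x⁆ * q⁆ = 0 := by rw [h, lie_zero]
      rw [lie_add, lie_mul_eq, hpq, mul_one, ← ad_apply K, map_smul, ad_apply] at hp
      rw [← hp, Nat.cast_add_one, add_smul, one_smul]
      abel
    rw [hlie, zero_mul, add_zero] at h
    exact (smul_eq_zero.1 h).resolve_left (Nat.cast_add_one_ne_zero m)

theorem exists_eq_aeval_of_lie_eq_zero (hpq : ⁅p, q⁆ = 1) (hgen : Algebra.adjoin K {p, q} = ⊤)
    {x : A} (hx : ⁅p, x⁆ = 0) : ∃ a : K[X], x = aeval p a := by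
  obtain ⟨a, y, rfl⟩ := exists_eq_aeval_add_mul hpq hgen x
  obtain ⟨n, hn⟩ := exists_ad_pow_eq_zero hpq hgen y
  have hy : y = 0 := by
    refine eq_zero_of_smul_add_lie_mul_eq_zero (m := 0) hpq hn ?_
    rw [lie_add, lie_self_aeval, lie_mul_eq, hpq, zero_add, mul_one] at hx
    rw [← hx, Nat.cast_zero, zero_add, one_smul, add_comm]
  exact ⟨a, by rw [hy, zero_mul, add_zero]⟩

theorem aeval_injective_of_lie_eq_one [Nontrivial A] (hpq : ⁅p, q⁆ = 1) :
    Function.Injective (aeval (R := K) p) := by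
  refine (injective_iff_map_eq_zero _).2 fun a ha => ?_
  induction hn : a.natDegree using Nat.strong_induction_on generalizing a with
  | _ n ih =>
  have hda : aeval p (derivative a) = 0 := by
    have hlie := lie_aeval_of_lie_lie_eq_zero (by rw [hpq, lie_one_eq_zero]) a
    rwa [ha, zero_lie, hpq, one_mul, eq_comm] at hlie
  have hdeg : a.natDegree = 0 := by
    by_contra h0
    exact h0 (derivative_eq_zero.1 (ih _ (hn ▸ natDegree_derivative_lt h0) _ hda rfl))
  obtain ⟨c, rfl⟩ := natDegree_eq_zero.1 hdeg
  rw [aeval_C, map_eq_zero] at ha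
  rw [ha, C_0]

theorem mul_derivative_eq_of_lie_lie_eq_zero [Nontrivial A] (hpq : ⁅p, q⁆ = 1) {z w : A}
    {f b : K[X]} {n : ℕ} (hz : ⁅p, z⁆ = aeval p f) (hzw : ⁅p, ⁅z, w⁆⁆ = 0)
    (hb : (ad K A p ^ (n + 1)) w = aeval p b) :
    (n + 1 : K[X]) * b * derivative f = f * derivative b := by
  have hleibniz : 0 = ⁅z, aeval p b⁆ + (n + 1 : K) • ⁅aeval p f, (ad K A p ^ n) w⁆ := by
    rw [← hz, ← hb, ← ad_pow_succ_lie (by rw [hz, lie_self_aeval]), pow_succ,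
      Module.End.mul_apply, ad_apply, hzw, map_zero]
  have hw : ⁅p, (ad K A p ^ n) w⁆ = aeval p b := by
    rw [← hb, pow_succ', Module.End.mul_apply, ad_apply]
  have hlie : ⁅aeval p f, (ad K A p ^ n) w⁆ = aeval p (b * derivative f) := by
    rw [lie_aeval_of_lie_lie_eq_zero (by rw [hw, lie_self_aeval]), hw, map_mul]
  have hpoly : 0 = -(f * derivative b) + (n + 1 : K) • (b * derivative f) := by
    apply aeval_injective_of_lie_eq_one (K := K) hpq
    rw [map_zero, map_add, map_neg, map_smul, ← hlie, ← lie_aeval_of_lie_eq_aeval hz, ← hleibniz]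
  rw [smul_eq_C_mul, C_add, map_natCast, C_1] at hpoly
  linear_combination -hpoly

theorem exists_eq_aeval_add_aeval_of_lie_lie_eq_zero [Nontrivial A] (hpq : ⁅p, q⁆ = 1)
    (hgen : Algebra.adjoin K {p, q} = ⊤) {z : A} {f : K[X]} (hf : f ≠ 0)
    (hz : ⁅p, z⁆ = aeval p f) {w : A} (hw : ⁅p, ⁅z, w⁆⁆ = 0) :
    ∃ b h : K[X], w = aeval p b + aeval z h := by
  obtain ⟨n, hn⟩ := exists_ad_pow_eq_zero hpq hgen w
  induction n generalizing w with
  | zero => exact ⟨0, 0, by simpa using hn⟩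
  | succ n ih =>
    obtain ⟨b, hb⟩ := exists_eq_aeval_of_lie_eq_zero hpq hgen (x := (ad K A p ^ n) w)
      (by rwa [pow_succ'] at hn)
    rcases n with _ | n
    · exact ⟨b, 0, by simpa using hb⟩
    obtain ⟨c, rfl⟩ := exists_eq_C_mul_pow_of_mul_derivative_eq hf
      (mul_derivative_eq_of_lie_lie_eq_zero hpq hz hw hb)
    -- `ad p` applied `n + 1` times to `z ^ (n + 1)` gives `(n + 1)! f(p) ^ (n + 1)`, so subtracting
    -- a multiple of `z ^ (n + 1)` from `w` lowers its `ad p`-order.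
    set d : K := c / (n + 1).factorial
    have hd : d * ((n + 1).factorial : K) = c :=
      div_mul_cancel₀ _ (Nat.cast_ne_zero.2 (Nat.factorial_ne_zero _))
    have hlie : ⁅p, ⁅z, w - d • z ^ (n + 1)⁆⁆ = 0 := by
      rw [lie_sub, ((Commute.self_pow z _).smul_right d).lie_eq, sub_zero, hw]
    have hkill : (ad K A p ^ (n + 1)) (w - d • z ^ (n + 1)) = 0 := by
      rw [map_sub, map_smul, ad_pow_self_pow hz, hb, smul_smul, hd, C_mul', map_smul, sub_self]
    obtain ⟨b, h, hbh⟩ := ih hlie hkill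
    exact ⟨b, h + C d * X ^ (n + 1), by
      rw [sub_eq_iff_eq_add.1 hbh, map_add, map_mul, aeval_C, map_pow, aeval_X, Algebra.smul_def,
        add_assoc]⟩

theorem weyl_degree_one_in_q_general [Nontrivial A] (hpq : p * q - q * p = 1)
    (hgen : Algebra.adjoin K {p, q} = ⊤) (z w : A) (hc : z * w - w * z = 1) (f g : K[X])
    (hf : f ≠ 0) (hz : z = aeval p f * q + aeval p g) :
    (∃ (α γ : K) (h : K[X]), α ≠ 0 ∧ z = α • q + aeval p g ∧
        w = γ • (1 : A) - α⁻¹ • p + aeval z h) ∧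
      Algebra.adjoin K {z, w} = ⊤ := by
  change ⁅p, q⁆ = 1 at hpq
  change ⁅z, w⁆ = 1 at hc
  have hpz : ⁅p, z⁆ = aeval p f := by
    rw [hz, lie_add, lie_mul_eq, lie_self_aeval, lie_self_aeval, hpq, zero_mul, mul_one, zero_add,
      add_zero]
  obtain ⟨b, h, hw⟩ := exists_eq_aeval_add_aeval_of_lie_lie_eq_zero hpq hgen hf hpz
    (by rw [hc, lie_one_eq_zero])
  have hfb : f * derivative b = -1 := by
    apply aeval_injective_of_lie_eq_one hpq
    rw [hw, lie_add, lie_self_aeval, add_zero, lie_aeval_of_lie_eq_aeval hpz] at hc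
    rw [map_neg, map_one, ← hc, neg_neg]
  obtain ⟨α, γ, hα, rfl, rfl⟩ := exists_eq_C_of_mul_derivative_eq_neg_one hfb
  have hzα : z = α • q + aeval p g := by rw [hz, aeval_C, Algebra.smul_def]
  have hwγ : w = γ • (1 : A) - α⁻¹ • p + aeval z h := by
    rw [hw, map_sub, map_mul, aeval_C, aeval_C, aeval_X, Algebra.algebraMap_eq_smul_one,
      ← Algebra.smul_def]
  exact ⟨⟨α, γ, h, hα, hzα, hwγ⟩, adjoin_pair_eq_top_of_eq hgen hα hzα hwγ⟩

end CanonicalPair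

section Weyl

variable (K : Type) [Field K]

theorem Wp_mul_Wq_sub_Wq_mul_Wp : Wp K * Wq K - Wq K * Wp K = 1 := by
  rw [sub_eq_iff_eq_add']
  simpa [Wp, Wq] using RingQuot.mkAlgHom_rel K (WeylRel.rel (K := K))

theorem adjoin_Wp_Wq : Algebra.adjoin K {Wp K, Wq K} = ⊤ := by
  have himage : RingQuot.mkAlgHom K (WeylRel K) '' Set.range (FreeAlgebra.ι K) = {Wp K, Wq K} := by
    rw [← Set.range_comp]
    ext
    simp [Wp, Wq, eq_comm]
  rw [← himage, ← AlgHom.map_adjoin, FreeAlgebra.adjoin_range_ι, Algebra.map_top,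
    AlgHom.range_eq_top]
  exact RingQuot.mkAlgHom_surjective K (WeylRel K)

/-- The representation of `A₁` on `K[X]` with `p` acting as multiplication by `X` and `q` as
`-d/dX`; it shows that the defining relation does not collapse the algebra. -/
noncomputable def weylRep : Weyl K →ₐ[K] Module.End K K[X] :=
  RingQuot.liftAlgHom K ⟨FreeAlgebra.lift K ![LinearMap.mulLeft K X, -derivative], by
    rintro _ _ ⟨⟩
    refine LinearMap.ext fun a => ?_
    simp⟩

instance : Nontrivial (Weyl K) := (weylRep K).toRingHom.domain_nontrivial

end Weyl

/-- If `[z,w] = 1` and `z = f(p)q + g(p)` with `f ≠ 0`, then `z = αq + g(p)` with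
`α ∈ K^*` and `w = γ - α⁻¹ p + h(z)` for some `γ ∈ K`, `h ∈ K[X]`; in particular
`z` and `w` generate `A₁`. -/
theorem weyl_degree_one_in_q (K : Type) [Field K] [CharZero K]
    (z w : Weyl K) (hc : z * w - w * z = 1)
    (f g : Polynomial K) (hf : f ≠ 0)
    (hz : z = Polynomial.aeval (Wp K) f * Wq K + Polynomial.aeval (Wp K) g) :
    (∃ (α γ : K) (h : Polynomial K), α ≠ 0 ∧
        z = α • Wq K + Polynomial.aeval (Wp K) g ∧
        w = γ • (1 : Weyl K) - α⁻¹ • Wp K + Polynomial.aeval z h) ∧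
      Algebra.adjoin K {z, w} = (⊤ : Subalgebra K (Weyl K)) :=
  weyl_degree_one_in_q_general (Wp_mul_Wq_sub_Wq_mul_Wp K) (adjoin_Wp_Wq K) z w hc f g hf hz
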